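/- arXiv:2510.22773 — 3 statements merged into one kernel-verified Lean document; each statement's English description precedes it below -/
import Mathlib

section
/- Let $b, c, s, \tau, w > 0$ and $p \in \mathbb{R}$. Define the CUBIC window size $W = w + c\,(s - (b w / c)^{1/3})^3$ (using the real cube root) and the sending rate $x = W/\tau$. Then the pair of fluid-equilibrium conditions [$W = w$ and $s \cdot x \cdot p = 1$] holds if and only if $w = (c/b)\,s^3$ and $p = b\tau/(c\,s^4)$. -/
/-- The inflection point `K = (b w / c)^(1/3)` of the CUBIC window-growth function `s ↦ W(w, s)`,
the growth duration at which the window is back at its maximum `w`. For `b * w / c < 0`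
the real power is not the real cube root, so only `0 ≤ b * w / c` is meaningful. -/
noncomputable def cubicInflection (b c w : ℝ) : ℝ :=
  (b * w / c) ^ ((1 : ℝ) / 3)

/-- The CUBIC window-growth function `W(w, s)`: the congestion-window size after growing for a
duration `s` since the last loss, which occurred at window size `w`. -/
noncomputable def cubicWindow (b c w s : ℝ) : ℝ :=
  w + c * (s - cubicInflection b c w) ^ 3

section Window

variable {b c w s : ℝ}

theorem cubicWindow_eq_max_iff_eq_inflection (hc : c ≠ 0) :
    cubicWindow b c w s = w ↔ s = cubicInflection b c w := by
  rw [cubicWindow, add_eq_left, mul_eq_zero_iff_left hc, pow_eq_zero_iff three_ne_zero,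
    sub_eq_zero]

theorem eq_cubicInflection_iff_pow_eq (hs : 0 ≤ s) (hbwc : 0 ≤ b * w / c) :
    s = cubicInflection b c w ↔ s ^ 3 = b * w / c := by
  rw [cubicInflection, one_div, Real.eq_rpow_inv hs hbwc three_ne_zero, Real.rpow_ofNat]

theorem cubicWindow_eq_max_iff (hb : b ≠ 0) (hc : c ≠ 0) (hs : 0 ≤ s) (hbwc : 0 ≤ b * w / c) :
    cubicWindow b c w s = w ↔ w = (c / b) * s ^ 3 := by
  rw [cubicWindow_eq_max_iff_eq_inflection hc, eq_cubicInflection_iff_pow_eq hs hbwc,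
    eq_div_iff hc, div_mul_eq_mul_div, eq_div_iff hb, mul_comm (s ^ 3), mul_comm w, eq_comm]

end Window

theorem mul_div_mul_eq_one_iff_eq_div {F : Type*} [Field F] {s w τ p : F}
    (hs : s ≠ 0) (hw : w ≠ 0) (hτ : τ ≠ 0) :
    s * (w / τ) * p = 1 ↔ p = τ / (s * w) := by
  rw [← mul_div_assoc, mul_comm, ← eq_div_iff (div_ne_zero (mul_ne_zero hs hw) hτ),
    one_div_div]

/-- CUBIC fluid-equilibrium characterization: for `b, c, s, τ, w > 0` and real `p`,
with window size `W = w + c (s - (b w / c)^(1/3))^3` and rate `x = W/τ`,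
the conditions `W = w` and `s·x·p = 1` hold iff `w = (c/b) s^3` and `p = bτ/(c s^4)`. -/
theorem cubic_fluid_equilibrium (b c s τ w p : ℝ)
    (hb : 0 < b) (hc : 0 < c) (hs : 0 < s) (hτ : 0 < τ) (hw : 0 < w) :
    (w + c * (s - (b * w / c) ^ ((1 : ℝ) / 3)) ^ 3 = w ∧
      s * ((w + c * (s - (b * w / c) ^ ((1 : ℝ) / 3)) ^ 3) / τ) * p = 1) ↔
    (w = (c / b) * s ^ 3 ∧ p = b * τ / (c * s ^ 4)) := by
  change (cubicWindow b c w s = w ∧ s * (cubicWindow b c w s / τ) * p = 1) ↔ _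
  have window_iff : cubicWindow b c w s = w ↔ w = (c / b) * s ^ 3 :=
    cubicWindow_eq_max_iff hb.ne' hc.ne' hs.le (by positivity)
  rw [window_iff]
  refine and_congr_right fun w_eq => ?_
  have loss_rate : τ / (s * w) = b * τ / (c * s ^ 4) := by
    rw [w_eq]
    field_simp
  rw [window_iff.mpr w_eq, mul_div_mul_eq_one_iff_eq_div hs.ne' hw.ne' hτ.ne', loss_rate]
end

section
/- Let $b, c, \tau, \alpha, \chi > 0$ and $C \in \mathbb{R}$ with $C > 0$, and define $\tilde{S}_2'(s) = \dfrac{7c^2}{b\tau} s^6 - 4c\,(C - \alpha\chi)\, s^3 - 3c\, s^2$. Then there exists $s' > 0$ such that $\tilde{S}_2'(s) < 0$ for all $s$ with $0 < s < s'$, and $\tilde{S}_2'(s) > 0$ for all $s > s'$ (in particular $s'$ is the unique positive root of $\tilde{S}_2'$). -/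
/-!
On `(0, ∞)` the sign of `A xⁿ - D xᵐ - E xᵏ` with `k < m < n` is that of its quotient by the middle
power, `A xⁿ⁻ᵐ - E / xᵐ⁻ᵏ - D`. For `A, E > 0` this quotient increases strictly from `-∞` to `∞`
whatever the sign of `D`, so it has exactly one zero, where it passes from negative to positive.
-/

section Trinomial

open Set Filter Topology

theorem strictMonoOn_mul_pow_sub_div_pow {K : Type*} [Field K] [LinearOrder K]
    [IsStrictOrderedRing K] {A E : K} (hA : 0 < A) (hE : 0 ≤ E) {p : ℕ} (hp : p ≠ 0) (q : ℕ) :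
    StrictMonoOn (fun x : K => A * x ^ p - E / x ^ q) (Ioi 0) := by
  intro x (hx : 0 < x) y _ hxy
  have hpow : A * x ^ p < A * y ^ p := by gcongr
  have hdiv : E / y ^ q ≤ E / x ^ q := by gcongr
  exact (sub_lt_sub_right hpow _).trans_le (sub_le_sub_left hdiv _)

theorem surjOn_mul_pow_sub_div_pow {A E : ℝ} (hA : 0 < A) (hE : 0 < E) {p q : ℕ}
    (hp : p ≠ 0) (hq : q ≠ 0) :
    SurjOn (fun x : ℝ => A * x ^ p - E / x ^ q) (Ioi 0) univ := by
  have hcont : ContinuousOn (fun x : ℝ => A * x ^ p - E / x ^ q) (Ioi 0) :=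
    (by fun_prop : ContinuousOn (fun x : ℝ => A * x ^ p) (Ioi 0)).sub <|
      continuousOn_const.div (by fun_prop) fun x hx => pow_ne_zero q (ne_of_gt hx)
  have hzero : Tendsto (fun x : ℝ => A * x ^ p - E / x ^ q) (𝓝[>] 0) atBot := by
    have hpow : Tendsto (fun x : ℝ => A * x ^ p) (𝓝[>] 0) (𝓝 (A * 0 ^ p)) :=
      (by fun_prop : Continuous fun x : ℝ => A * x ^ p).continuousWithinAt
    have hdiv : Tendsto (fun x : ℝ => E / x ^ q) (𝓝[>] 0) atTop := by
      simpa only [div_eq_mul_inv, inv_pow, Function.comp_def] using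
        ((tendsto_pow_atTop hq).comp tendsto_inv_nhdsGT_zero).const_mul_atTop hE
    simpa only [sub_eq_add_neg] using hpow.add_atBot (tendsto_neg_atBot_iff.2 hdiv)
  have htop : Tendsto (fun x : ℝ => A * x ^ p - E / x ^ q) atTop atTop := by
    have hpow : Tendsto (fun x : ℝ => A * x ^ p) atTop atTop :=
      (tendsto_pow_atTop hp).const_mul_atTop hA
    have hdiv : Tendsto (fun x : ℝ => E / x ^ q) atTop (𝓝 0) :=
      (tendsto_pow_atTop hq).const_div_atTop E
    simpa only [sub_eq_add_neg] using hpow.atTop_add hdiv.neg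
  exact isPreconnected_Ioi.intermediate_value_Iii
    (l₁ := 𝓝[>] 0) inf_le_right (le_principal_iff.2 (Ioi_mem_atTop 0)) hcont hzero htop

theorem exists_trinomial_neg_iff_lt_and_pos_iff_gt {A E : ℝ} (hA : 0 < A) (hE : 0 < E)
    (D : ℝ) {k m n : ℕ} (hkm : k < m) (hmn : m < n) :
    ∃ r : ℝ, 0 < r ∧ ∀ x : ℝ, 0 < x →
      (A * x ^ n - D * x ^ m - E * x ^ k < 0 ↔ x < r) ∧
      (0 < A * x ^ n - D * x ^ m - E * x ^ k ↔ r < x) := by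
  let g (x : ℝ) : ℝ := A * x ^ (n - m) - E / x ^ (m - k)
  have hmono : StrictMonoOn g (Ioi 0) :=
    strictMonoOn_mul_pow_sub_div_pow hA hE.le (Nat.sub_ne_zero_of_lt hmn) (m - k)
  obtain ⟨r, hr, hgr : g r = D⟩ := surjOn_mul_pow_sub_div_pow hA hE
    (Nat.sub_ne_zero_of_lt hmn) (Nat.sub_ne_zero_of_lt hkm) (mem_univ D)
  refine ⟨r, hr, fun x hx => ?_⟩
  have hfactor : A * x ^ n - D * x ^ m - E * x ^ k = x ^ m * g x - x ^ m * g r := by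
    have hn : x ^ n = x ^ m * x ^ (n - m) := (pow_mul_pow_sub x hmn.le).symm
    have hk : x ^ m / x ^ (m - k) = x ^ k := by
      rw [← pow_mul_pow_sub x hkm.le, mul_div_cancel_right₀ _ (by positivity)]
    rw [hgr, hn, ← hk]
    ring
  rw [hfactor, sub_neg, sub_pos, mul_lt_mul_iff_right₀ (pow_pos hx m),
    mul_lt_mul_iff_right₀ (pow_pos hx m)]
  exact ⟨hmono.lt_iff_lt hx hr, hmono.lt_iff_lt hr hx⟩

end Trinomial

/-- Unique turning point of `S̃₂'(s) = (7c²/(bτ)) s⁶ - 4c (C - αχ) s³ - 3c s²`: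
there is an `s' > 0` such that `S̃₂'` is negative on `(0, s')` and positive on
`(s', ∞)`. -/
theorem S2_deriv_unique_turning_point (b c τ α χ C : ℝ)
    (hb : 0 < b) (hc : 0 < c) (hτ : 0 < τ) (hα : 0 < α) (hχ : 0 < χ) (hC : 0 < C) :
    ∃ s' : ℝ, 0 < s' ∧
      (∀ s : ℝ, 0 < s → s < s' →
        7 * c ^ 2 / (b * τ) * s ^ 6 - 4 * c * (C - α * χ) * s ^ 3 - 3 * c * s ^ 2 < 0) ∧
      (∀ s : ℝ, s' < s →
        0 < 7 * c ^ 2 / (b * τ) * s ^ 6 - 4 * c * (C - α * χ) * s ^ 3 - 3 * c * s ^ 2) := by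
  have hlead : 0 < 7 * c ^ 2 / (b * τ) := by positivity
  have hlow : 0 < 3 * c := by positivity
  obtain ⟨r, hr, hsign⟩ := exists_trinomial_neg_iff_lt_and_pos_iff_gt hlead hlow
    (4 * c * (C - α * χ)) (k := 2) (m := 3) (n := 6) (by norm_num) (by norm_num)
  exact ⟨r, hr, fun s hs hsr => (hsign s hs).1.2 hsr, fun s hrs => (hsign s (hr.trans hrs)).2.2 hrs⟩
end

section
/- Let $\tau > 0$, $\chi > 0$, $C > 0$ and $0 < \beta \leq \alpha$. Then for every real $w > \tau\alpha(C - \chi)$ it holds that $\dfrac{1}{\beta\tau} w^2 + \dfrac{\alpha(2\chi - C)}{\beta} w + \dfrac{\tau \alpha^2 \chi^2}{\beta} - \tau\alpha C \chi > 0$. -/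
/-!
With `v = w + τ α χ`, the threshold `w > τ α (C - χ)` becomes `v > τ α C`, and clearing denominators
turns the quadratic into `v (v - τ α C) + τ² α C χ (α - β)`. The product is positive above the
threshold, and the remainder is nonnegative because `β ≤ α`.
-/

section Field

variable {K : Type*} [Field K]

theorem quadratic_eq_shifted_mul_excess_add_slack_div {τ β : K} (hτ : τ ≠ 0) (hβ : β ≠ 0)
    (χ C α w : K) :
    1 / (β * τ) * w ^ 2 + α * (2 * χ - C) / β * w + τ * α ^ 2 * χ ^ 2 / β - τ * α * C * χ =
      ((w + τ * α * χ) * (w + τ * α * χ - τ * α * C) + τ ^ 2 * α * C * χ * (α - β)) / (β * τ) := by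
  field_simp
  ring

variable [LinearOrder K] [IsStrictOrderedRing K]

theorem quadratic_positive_above_threshold'_general {τ χ C α β w : K}
    (hτ : 0 < τ) (hχ : 0 ≤ χ) (hC : 0 ≤ C) (hβ : 0 < β) (hβα : β ≤ α)
    (hw : τ * α * (C - χ) < w) :
    0 < 1 / (β * τ) * w ^ 2 + α * (2 * χ - C) / β * w
        + τ * α ^ 2 * χ ^ 2 / β - τ * α * C * χ := by
  have hα : 0 < α := hβ.trans_le hβα
  have excess_pos : 0 < w + τ * α * χ - τ * α * C := by linarith
  have shifted_pos : 0 < w + τ * α * χ :=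
    (show 0 ≤ τ * α * C by positivity).trans_lt (sub_pos.mp excess_pos)
  have slack_nonneg : 0 ≤ τ ^ 2 * α * C * χ * (α - β) :=
    mul_nonneg (by positivity) (sub_nonneg.mpr hβα)
  rw [quadratic_eq_shifted_mul_excess_add_slack_div hτ.ne' hβ.ne']
  exact div_pos (add_pos_of_pos_of_nonneg (mul_pos shifted_pos excess_pos) slack_nonneg)
    (mul_pos hβ hτ)

end Field

/-- Positivity of the quadratic
`Ψ(w) = (1/(βτ)) w² + (α(2χ - C)/β) w + τα²χ²/β - ταCχ` for all
`w > τα(C - χ)`, given `τ, χ, C > 0` and `0 < β ≤ α`. -/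
theorem quadratic_positive_above_threshold' (τ χ C α β : ℝ)
    (hτ : 0 < τ) (hχ : 0 < χ) (hC : 0 < C) (hβ : 0 < β) (hβα : β ≤ α) :
    ∀ w : ℝ, τ * α * (C - χ) < w →
      0 < 1 / (β * τ) * w ^ 2 + α * (2 * χ - C) / β * w
          + τ * α ^ 2 * χ ^ 2 / β - τ * α * C * χ :=
  fun _ hw => quadratic_positive_above_threshold'_general hτ hχ.le hC.le hβ hβα hw
end
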